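/- arXiv:1406.5158 — 5 statements merged into one kernel-verified Lean document; each statement's English description precedes it below -/
import Mathlib

section
/- For all integers m and n, the Heisenberg operators on the neutral fermion Fock space satisfy h_m ∘ h_n − h_n ∘ h_m = m · δ_{m+n,0} · id_F. (Hence the h_n generate a representation of the Heisenberg algebra H_ℤ on F.) -/
noncomputable section

/-- The neutral fermion Fock space `F = F^{⊗1/2}`: the complex vector space with
basis `{e_S : S a finite subset of ℕ}`. -/
abbrev FockD : Type := Finset ℕ →₀ ℂ

/-- Basis vector `e_S`. -/
def eD (S : Finset ℕ) : FockD := Finsupp.single S 1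

/-- Action of the fermion mode `a_m` on the basis vector `e_S`. -/
def aVec (m : ℤ) (S : Finset ℕ) : FockD :=
  if 0 ≤ m then
    if m.toNat ∈ S then 0
    else ((-1 : ℂ) ^ (S.filter (fun s => m.toNat < s)).card) • eD (insert m.toNat S)
  else
    if (-m - 1).toNat ∈ S then
      ((-1 : ℂ) ^ (S.filter (fun s => (-m - 1).toNat < s)).card) • eD (S.erase ((-m - 1).toNat))
    else 0

/-- The fermion mode `a_m` as a linear operator on `F`. -/
def aOp (m : ℤ) : FockD →ₗ[ℂ] FockD :=
  Finsupp.lsum ℂ fun S => LinearMap.toSpanSingleton ℂ FockD (aVec m S)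

/-- Fermionic normal ordered product `:a_i a_j:`. -/
def NO (i j : ℤ) : FockD →ₗ[ℂ] FockD :=
  if 0 ≤ i then (aOp i).comp (aOp j) else -((aOp j).comp (aOp i))

/-- Heisenberg operator `h_n = (1/2) ∑_{i∈ℤ} (−1)^{i+1} :a_i a_{−2n−1−i}:`
(on each vector only finitely many summands are nonzero). -/
def hD (n : ℤ) (x : FockD) : FockD :=
  (1 / 2 : ℂ) • ∑ᶠ i : ℤ, ((-1 : ℂ) ^ (i + 1)) • NO i (-2 * n - 1 - i) x

/-- Virasoro operator `L^{1/2}_m = (1/2) ∑_{i∈ℤ} i · :a_i a_{−m−i−1}:`. -/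
def LhalfD (m : ℤ) (x : FockD) : FockD :=
  (1 / 2 : ℂ) • ∑ᶠ i : ℤ, (i : ℂ) • NO i (-m - i - 1) x

/-- 2-point Virasoro operator `L¹_n = (1/2) ∑_{j∈ℤ} :h_j h_{n−j}:`, where the bosonic
normal ordered product is `:h_j h_k: = h_j h_k` if `j ≤ k` and `h_k h_j` otherwise. -/
def L1D (n : ℤ) (x : FockD) : FockD :=
  (1 / 2 : ℂ) • ∑ᶠ j : ℤ, if j ≤ n - j then hD j (hD (n - j) x) else hD (n - j) (hD j x)

/-- Charge `c(S) = #{s ∈ S : s odd} − #{s ∈ S : s even}`. -/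
def chg (S : Finset ℕ) : ℤ :=
  ((S.filter fun s => Odd s).card : ℤ) - ((S.filter fun s => Even s).card : ℤ)

/-- Charge-`n` component `F_{(n)}`: the span of the `e_S` with `c(S) = n`. -/
def FockComp (n : ℤ) : Submodule ℂ FockD :=
  Submodule.span ℂ {x : FockD | ∃ S : Finset ℕ, chg S = n ∧ x = eD S}

/-- Index set of the vacuum-like vector `v_n`. -/
def vSet (n : ℤ) : Finset ℕ :=
  if 0 ≤ n then (Finset.range n.toNat).image fun i => 2 * i + 1
  else (Finset.range (-n).toNat).image fun i => 2 * i

/-- Vacuum-like vector `v_n` (`v_0 = e_∅`, `v_n = e_{{1,3,…,2n−1}}`,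
`v_{−n} = e_{{0,2,…,2n−2}}` for `n > 0`). -/
def vD (n : ℤ) : FockD := eD (vSet n)

/-- The sign `(-1)^{#{s ∈ S : s > t}}`. -/
def sgnD (t : ℕ) (S : Finset ℕ) : ℂ := (-1 : ℂ) ^ (S.filter (fun s => t < s)).card

theorem sgnD_insert (t u : ℕ) (S : Finset ℕ) (hu : u ∉ S) :
    sgnD t (insert u S) = if t < u then - sgnD t S else sgnD t S := by
  unfold sgnD
  rw [Finset.filter_insert]
  split_ifs with h
  · rw [Finset.card_insert_of_notMem (by simp [hu]), pow_succ]; ring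
  · rfl

theorem sgnD_erase (t u : ℕ) (S : Finset ℕ) (hu : u ∈ S) :
    sgnD t (S.erase u) = if t < u then - sgnD t S else sgnD t S := by
  have h := sgnD_insert t u (S.erase u) (by simp)
  rw [Finset.insert_erase hu] at h
  rw [h]; split_ifs <;> simp

theorem sgnD_sq (t : ℕ) (S : Finset ℕ) : sgnD t S * sgnD t S = 1 := by
  unfold sgnD
  rw [← mul_pow]; simp

theorem aOp_eD (m : ℤ) (S : Finset ℕ) : aOp m (eD S) = aVec m S := by
  simp [aOp, eD]

theorem aOp_cr (t : ℕ) (S : Finset ℕ) :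
    aOp (t : ℤ) (eD S) = if t ∈ S then 0 else sgnD t S • eD (insert t S) := by
  rw [aOp_eD]; simp [aVec, sgnD]

theorem aOp_an (t : ℕ) (S : Finset ℕ) :
    aOp (-(t : ℤ) - 1) (eD S) = if t ∈ S then sgnD t S • eD (S.erase t) else 0 := by
  rw [aOp_eD, aVec, if_neg (by omega)]
  have : (-(-(t : ℤ) - 1) - 1).toNat = t := by omega
  rw [this]; rfl

theorem int_cases (m : ℤ) : (∃ t : ℕ, m = t) ∨ (∃ t : ℕ, m = -(t : ℤ) - 1) := by
  by_cases h : 0 ≤ m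
  · exact Or.inl ⟨m.toNat, by omega⟩
  · exact Or.inr ⟨(-m - 1).toNat, by omega⟩

theorem cliff_cr_cr (t u : ℕ) (S : Finset ℕ) :
    aOp t (aOp u (eD S)) + aOp u (aOp t (eD S)) = 0 := by
  rw [aOp_cr, aOp_cr]
  by_cases htu : t = u
  · subst htu
    by_cases ht : t ∈ S <;> simp [ht, aOp_cr]
  by_cases ht : t ∈ S <;> by_cases hu : u ∈ S <;>
    simp only [ht, hu, if_true, if_false, map_zero, map_smul, aOp_cr, Finset.mem_insert, or_true,
      smul_zero, add_zero, zero_add, htu, Ne.symm htu, or_self, smul_smul, sgnD_insert, not_false_eq_true]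
  · rw [Finset.insert_comm t u, ← add_smul]
    convert zero_smul ℂ _
    rcases lt_or_gt_of_ne htu with h | h
    · simp [h, not_lt_of_gt h]; ring
    · simp [h, not_lt_of_gt h]; ring

theorem cliff_an_an (t u : ℕ) (S : Finset ℕ) :
    aOp (-(t : ℤ) - 1) (aOp (-(u : ℤ) - 1) (eD S)) +
      aOp (-(u : ℤ) - 1) (aOp (-(t : ℤ) - 1) (eD S)) = 0 := by
  rw [aOp_an, aOp_an]
  by_cases htu : t = u
  · subst htu
    by_cases ht : t ∈ S <;> simp [ht, aOp_an]
  by_cases ht : t ∈ S <;> by_cases hu : u ∈ S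
  · simp only [ht, hu, if_true, map_smul, aOp_an, Finset.mem_erase, ne_eq, 
      htu, Ne.symm htu, not_false_eq_true, and_self, smul_smul, sgnD_erase]
    rw [Finset.erase_right_comm, ← add_smul]
    convert zero_smul ℂ _
    rcases lt_or_gt_of_ne htu with h | h
    · simp [h, not_lt_of_gt h]; ring
    · simp [h, not_lt_of_gt h]; ring
  all_goals simp [ht, hu, aOp_an]

theorem cliff_cr_an (t u : ℕ) (S : Finset ℕ) :
    aOp (t : ℤ) (aOp (-(u : ℤ) - 1) (eD S)) +
      aOp (-(u : ℤ) - 1) (aOp (t : ℤ) (eD S)) = if t = u then eD S else 0 := by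
  rw [aOp_an, aOp_cr]
  by_cases htu : t = u
  · subst htu
    by_cases ht : t ∈ S
    · simp [ht, aOp_cr, smul_smul, sgnD_erase, sgnD_sq, Finset.insert_erase]
    · simp [ht, aOp_an, smul_smul, sgnD_insert, sgnD_sq, Finset.erase_insert]
  by_cases ht : t ∈ S <;> by_cases hu : u ∈ S
  · simp [ht, hu, aOp_cr, htu]
  · simp [ht, hu, htu]
  · simp only [ht, hu, if_true, if_false, map_smul, aOp_an, aOp_cr, Finset.mem_erase,
      Finset.mem_insert, or_true, and_false, smul_smul, sgnD_erase, htu, sgnD_insert,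
      not_false_eq_true]
    rw [Finset.erase_insert_of_ne htu, ← add_smul]
    convert zero_smul ℂ _
    rcases lt_or_gt_of_ne htu with h | h
    · simp [h, not_lt_of_gt h]; ring
    · simp [h, not_lt_of_gt h]; ring
  · simp [ht, hu, aOp_an, htu, Ne.symm htu]

theorem fock_ind {P : FockD → Prop} (h0 : P 0) (ha : ∀ x y, P x → P y → P (x + y))
    (hs : ∀ (c : ℂ) x, P x → P (c • x)) (he : ∀ S, P (eD S)) (x : FockD) : P x := by
  induction x using Finsupp.induction_linear with
  | zero => exact h0
  | add f g hf hg => exact ha f g hf hg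
  | single S c =>
    have := hs c _ (he S)
    simpa [eD] using this

theorem clifford (m n : ℤ) (x : FockD) :
    aOp m (aOp n x) + aOp n (aOp m x) = if m + n = -1 then x else 0 := by
  induction x using fock_ind with
  | h0 => simp
  | ha x y hx hy =>
    simp only [map_add]
    rw [add_add_add_comm, hx, hy]; split_ifs <;> simp
  | hs c x hx =>
    simp only [map_smul]
    rw [← smul_add, hx]; split_ifs <;> simp
  | he S =>
    rcases int_cases m with ⟨t, rfl⟩ | ⟨t, rfl⟩ <;> rcases int_cases n with ⟨u, rfl⟩ | ⟨u, rfl⟩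
    · rw [cliff_cr_cr, if_neg (by omega)]
    · rw [cliff_cr_an]; congr 1; simp only [eq_iff_iff]; omega
    · rw [add_comm, cliff_cr_an]; congr 1; simp only [eq_iff_iff]; omega
    · rw [cliff_an_an, if_neg (by omega)]

theorem aOp_eventually (x : FockD) : ∃ N : ℕ, ∀ i : ℤ, i < -(N : ℤ) → aOp i x = 0 := by
  induction x using fock_ind with
  | h0 => exact ⟨0, by simp⟩
  | ha x y hx hy =>
    obtain ⟨M, hM⟩ := hx
    obtain ⟨N, hN⟩ := hy
    refine ⟨M + N, fun i hi => ?_⟩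
    push_cast at hi
    rw [map_add, hM i (by omega), hN i (by omega), add_zero]
  | hs c x hx =>
    obtain ⟨M, hM⟩ := hx
    exact ⟨M, fun i hi => by rw [map_smul, hM i hi, smul_zero]⟩
  | he S =>
    refine ⟨S.sup id + 1, fun i hi => ?_⟩
    push_cast at hi
    rcases int_cases i with ⟨t, rfl⟩ | ⟨t, rfl⟩
    · omega
    · rw [aOp_an, if_neg]
      intro ht
      have : t ≤ S.sup id := Finset.le_sup (f := id) ht
      omega

theorem NO_apply (i j : ℤ) (x : FockD) :
    NO i j x = if 0 ≤ i then aOp i (aOp j x) else -(aOp j (aOp i x)) := by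
  unfold NO; split_ifs <;> simp

/-- Summand of the Heisenberg operator. -/
def hT (n i : ℤ) : FockD →ₗ[ℂ] FockD := ((-1 : ℂ) ^ (i + 1)) • NO i (-2 * n - 1 - i)

theorem hT_finite (n : ℤ) (x : FockD) : (Function.support fun i => hT n i x).Finite := by
  obtain ⟨N, hN⟩ := aOp_eventually x
  apply (Set.finite_Icc (-(N : ℤ)) (N - 2 * n - 1)).subset
  intro i hi
  by_contra hc
  apply hi
  simp only [Set.mem_Icc, not_and_or, not_le] at hc
  simp only [hT, LinearMap.smul_apply, NO_apply]
  by_cases h0 : 0 ≤ i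
  · rw [if_pos h0, hN (-2 * n - 1 - i) (by omega)]; simp
  · rw [if_neg h0]
    rcases hc with hc | hc
    · rw [hN i hc]; simp
    · by_cases hi2 : i < -(N : ℤ)
      · rw [hN i hi2]; simp
      · have h3 : aOp (-2 * n - 1 - i) x = 0 := hN _ (by omega)
        have h4 := clifford i (-2 * n - 1 - i) x
        rw [h3, map_zero, zero_add] at h4
        rw [h4, if_neg (by omega)]; simp

theorem hD_eq (n : ℤ) (x : FockD) : hD n x = (1 / 2 : ℂ) • ∑ᶠ i : ℤ, hT n i x := rfl

theorem hD_add (n : ℤ) (x y : FockD) : hD n (x + y) = hD n x + hD n y := by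
  simp only [hD_eq, map_add]
  rw [finsum_add_distrib (hT_finite n x) (hT_finite n y), smul_add]

theorem hD_smul (n : ℤ) (c : ℂ) (x : FockD) : hD n (c • x) = c • hD n x := by
  simp only [hD_eq, map_smul]
  rw [← smul_finsum' c (hT_finite n x), smul_comm]

/-- The Heisenberg operator as a linear map. -/
def hL (n : ℤ) : FockD →ₗ[ℂ] FockD where
  toFun := hD n
  map_add' := hD_add n
  map_smul' := hD_smul n

theorem hL_apply (n : ℤ) (x : FockD) : hL n x = hD n x := rfl

theorem map_hD {M : Type*} [AddCommGroup M] [Module ℂ M] (f : FockD →ₗ[ℂ] M) (n : ℤ) (x : FockD) :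
    f (hD n x) = (1 / 2 : ℂ) • ∑ᶠ i : ℤ, f (hT n i x) := by
  rw [hD_eq, map_smul]
  congr 1
  exact f.toAddMonoidHom.map_finsum (hT_finite n x)

theorem NO_comm (i j k : ℤ) (x : FockD) :
    NO i j (aOp k x) - aOp k (NO i j x) =
      (if j + k = -1 then aOp i x else 0) - (if i + k = -1 then aOp j x else 0) := by
  have key : aOp i (aOp j (aOp k x)) - aOp k (aOp i (aOp j x)) =
      (if j + k = -1 then aOp i x else 0) - (if i + k = -1 then aOp j x else 0) := by
    have h1 := congrArg (aOp i) (clifford j k x)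
    have h2 := clifford i k (aOp j x)
    rw [map_add] at h1
    have h3 : aOp i (if j + k = -1 then x else 0) = if j + k = -1 then aOp i x else 0 := by
      split_ifs <;> simp
    rw [h3] at h1
    rw [← h1, ← h2]; abel
  rw [NO_apply, NO_apply]
  by_cases h0 : 0 ≤ i
  · rw [if_pos h0, if_pos h0, key]
  · rw [if_neg h0, if_neg h0, ← key]
    have h1 := clifford i j (aOp k x)
    have h2 := congrArg (aOp k) (clifford i j x)
    have h3 : aOp k (if i + j = -1 then x else 0) = if i + j = -1 then aOp k x else 0 := by
      split_ifs <;> simp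
    rw [h3, ← h1, map_add] at h2
    rw [map_neg]
    rw [← sub_eq_zero] at h2 ⊢
    rw [← h2]
    abel

theorem zpow_neg_one_sq (i : ℤ) : (-1 : ℂ) ^ i * (-1 : ℂ) ^ i = 1 := by
  rw [← mul_zpow]; simp

theorem hD_comm_aOp (n k : ℤ) (x : FockD) :
    hD n (aOp k x) - aOp k (hD n x) = ((-1 : ℂ) ^ (k + 1)) • aOp (k - 2 * n) x := by
  rw [map_hD (aOp k), hD_eq, ← smul_sub, ← finsum_sub_distrib (hT_finite n _)]
  · have h : ∀ i, hT n i (aOp k x) - aOp k (hT n i x) =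
        (if i = k - 2 * n then ((-1 : ℂ) ^ (k + 1)) • aOp (k - 2 * n) x else 0) +
        (if i = -1 - k then ((-1 : ℂ) ^ (k + 1)) • aOp (k - 2 * n) x else 0) := by
      intro i
      simp only [hT, LinearMap.smul_apply, map_smul]
      rw [← smul_sub, NO_comm, smul_sub, sub_eq_add_neg]
      congr 1
      · by_cases hi : i = k - 2 * n
        · rw [if_pos hi, if_pos (by omega), hi]
          congr 1
          rw [show k - 2 * n + 1 = (k + 1) + 2 * (-n) by ring, zpow_add₀ (by simp), zpow_mul]
          simp
        · rw [if_neg hi, if_neg (by omega), smul_zero]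
      · by_cases hi : i = -1 - k
        · rw [if_pos hi, if_pos (by omega), hi, ← neg_smul]
          congr 1
          · rw [show -1 - k + 1 = (k + 1) + (-1) + 2 * (-k) by ring, zpow_add₀ (by simp),
              zpow_add₀ (by simp), zpow_mul]
            simp
          · congr 1; ring
        · rw [if_neg hi, if_neg (by omega), smul_zero, neg_zero]
    simp only [h]
    rw [finsum_add_distrib, finsum_eq_single _ (k - 2 * n), finsum_eq_single _ (-1 - k)]
    · simp only [if_true]
      rw [← two_smul ℂ, smul_smul]; norm_num
    · intro i hi; simp [hi]
    · intro i hi; simp [hi]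
    · apply (Set.finite_singleton (k - 2 * n)).subset
      intro i hi; by_contra hc; apply hi; exact if_neg hc
    · apply (Set.finite_singleton (-1 - k)).subset
      intro i hi; by_contra hc; apply hi; exact if_neg hc
  · apply (hT_finite n x).subset
    intro i hi hc
    apply hi
    have : hT n i x = 0 := hc
    simp [this]

/-- The commutator. -/
def CL (m n : ℤ) : FockD →ₗ[ℂ] FockD := (hL m).comp (hL n) - (hL n).comp (hL m)

theorem CL_apply (m n : ℤ) (x : FockD) : CL m n x = hD m (hD n x) - hD n (hD m x) := rfl

theorem hD_aOp (n k : ℤ) (x : FockD) :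
    hD n (aOp k x) = aOp k (hD n x) + ((-1 : ℂ) ^ (k + 1)) • aOp (k - 2 * n) x := by
  rw [← hD_comm_aOp]; abel

theorem sign_shift (k n : ℤ) : (-1 : ℂ) ^ (k - 2 * n + 1) = (-1 : ℂ) ^ (k + 1) := by
  rw [show k - 2 * n + 1 = (k + 1) + 2 * (-n) by ring, zpow_add₀ (by simp), zpow_mul]
  simp

theorem CL_comm (m n k : ℤ) (x : FockD) : CL m n (aOp k x) = aOp k (CL m n x) := by
  simp only [CL_apply, hD_aOp, hD_add, hD_smul, map_sub, sign_shift]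
  rw [show k - 2 * n - 2 * m = k - 2 * m - 2 * n by ring]
  module

theorem aOp_coeff (t : ℕ) (T : Finset ℕ) (ht : t ∉ T) (x : FockD) :
    (aOp (-(t : ℤ) - 1) x) T = sgnD t T * x (insert t T) := by
  induction x using fock_ind with
  | h0 => simp
  | ha x y hx hy => simp only [map_add, Finsupp.add_apply, hx, hy]; ring
  | hs c x hx => simp only [map_smul, Finsupp.smul_apply, hx, smul_eq_mul]; ring
  | he S =>
    rw [aOp_an]
    by_cases hS : S = insert t T
    · subst hS
      simp [eD, ht, sgnD_insert]
    · have : eD S (insert t T) = 0 := by simp [eD, hS]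
      rw [this, mul_zero]
      split_ifs with h
      · have h2 : S.erase t ≠ T := by
          rintro rfl
          exact hS (Finset.insert_erase h).symm
        simp [eD, h2]
      · simp

theorem aOp_cr_coeff (t : ℕ) (x : FockD) : (aOp (t : ℤ) x) ∅ = 0 := by
  induction x using fock_ind with
  | h0 => simp
  | ha x y hx hy => simp [hx, hy]
  | hs c x hx => simp [hx]
  | he S =>
    rw [aOp_cr]
    split_ifs
    · simp
    · simp [eD]

theorem aOp_cr_coeff' (i : ℤ) (hi : 0 ≤ i) (x : FockD) : (aOp i x) ∅ = 0 := by
  obtain ⟨t, rfl⟩ := Int.eq_ofNat_of_zero_le hi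
  exact aOp_cr_coeff t x

theorem aOp_vac (i : ℤ) (hi : i < 0) : aOp i (eD ∅) = 0 := by
  rcases int_cases i with ⟨t, rfl⟩ | ⟨t, rfl⟩
  · omega
  · simp [aOp_an]

theorem vac_of_killed (y : FockD) (h : ∀ k : ℤ, k < 0 → aOp k y = 0) : y = y ∅ • eD ∅ := by
  ext S
  rcases S.eq_empty_or_nonempty with rfl | ⟨t, ht⟩
  · simp [eD]
  · have h1 := aOp_coeff t (S.erase t) (by simp) y
    rw [h _ (by omega), Finset.insert_erase ht] at h1
    have h2 : sgnD t (S.erase t) ≠ 0 := by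
      intro h0
      have := sgnD_sq t (S.erase t)
      rw [h0] at this; simp at this
    have h3 : y S = 0 := by
      simpa [h2] using h1.symm
    rw [h3]
    have : (∅ : Finset ℕ) ≠ S := by rintro rfl; simp at ht
    simp [eD, this]

/-- Coefficient of the vacuum, as a linear functional. -/
def vacC : FockD →ₗ[ℂ] ℂ := Finsupp.lapply ∅

theorem vacC_apply (x : FockD) : vacC x = x ∅ := rfl

theorem vac_hD (m : ℤ) (hm : m ≤ 0) (x : FockD) : (hD m x) ∅ = 0 := by
  rw [← vacC_apply, map_hD]
  have : ∀ i, vacC (hT m i x) = 0 := by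
    intro i
    rw [hT, LinearMap.smul_apply, map_smul, NO_apply, vacC_apply]
    split_ifs with h
    · rw [aOp_cr_coeff' i h, smul_zero]
    · rw [Finsupp.neg_apply, aOp_cr_coeff' _ (by omega)]; simp
  simp [this]

theorem hD_vac (n : ℤ) (hn : 0 ≤ n) : hD n (eD ∅) = 0 := by
  rw [hD_eq]
  have : ∀ i, hT n i (eD ∅) = 0 := by
    intro i
    rw [hT, LinearMap.smul_apply, NO_apply]
    split_ifs with h
    · rw [aOp_vac (-2 * n - 1 - i) (by omega)]; simp
    · rw [aOp_vac i (by omega)]; simp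
  simp [this]

theorem vac_hT (m n i : ℤ) (hm : 0 < m) (hn : n < 0) :
    (hD m (hT n i (eD ∅))) ∅ = if m + n = 0 ∧ i ∈ Finset.Ico 0 (2 * m) then 1 else 0 := by
  by_cases hi : 0 ≤ i
  · rw [hT, LinearMap.smul_apply, hD_smul, NO_apply, if_pos hi, hD_aOp, hD_aOp, hD_vac m hm.le]
    simp only [Finsupp.smul_apply, Finsupp.add_apply, aOp_cr_coeff' i hi, zero_add, smul_eq_mul]
    rw [← mul_assoc, zpow_neg_one_sq, one_mul]
    have h := clifford (i - 2 * m) (-2 * n - 1 - i) (eD ∅)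
    by_cases hj : -2 * n - 1 - i < 0
    · rw [aOp_vac _ hj, map_zero, if_neg]
      · rfl
      · simp only [Finset.mem_Ico]; omega
    · have h2 := congrArg (fun y : FockD => y ∅) h
      simp only [Finsupp.add_apply, aOp_cr_coeff' (-2 * n - 1 - i) (by omega), add_zero] at h2
      rw [h2]
      by_cases hmn : m + n = 0
      · rw [if_pos (by omega), if_pos]
        · simp [eD]
        · simp only [Finset.mem_Ico]; omega
      · rw [if_neg (by omega), if_neg (by tauto)]; rfl
  · rw [hT, LinearMap.smul_apply, NO_apply, if_neg hi, aOp_vac i (by omega), if_neg]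
    · rw [map_zero, neg_zero, smul_zero, ← hL_apply, map_zero]; rfl
    · simp only [Finset.mem_Ico]; omega

theorem vac_pair (m n : ℤ) :
    (hD m (hD n (eD ∅))) ∅ = if 0 < m ∧ m + n = 0 then (m : ℂ) else 0 := by
  by_cases hm : 0 < m
  · by_cases hn : n < 0
    · have h := map_hD (vacC.comp (hL m)) n (eD ∅)
      simp only [LinearMap.comp_apply, hL_apply, vacC_apply, vac_hT m n _ hm hn] at h
      rw [h]
      by_cases hmn : m + n = 0
      · simp only [hmn, true_and, hm, and_self, if_true]
        rw [finsum_eq_sum_of_support_subset (s := Finset.Ico 0 (2 * m))]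
        · rw [Finset.sum_ite_mem]
          simp only [Finset.inter_self, Finset.sum_const, Int.card_Ico, nsmul_eq_mul]
          have : (((2 * m - 0).toNat : ℕ) : ℂ) = ((2 * m : ℤ) : ℂ) := by
            rw [← Int.cast_natCast]; congr 1; omega
          rw [this]; push_cast; simp
        · intro i hi
          by_contra hc
          apply hi
          exact if_neg hc
      · simp [hmn]
    · rw [hD_vac n (by omega), if_neg (by omega), ← hL_apply, map_zero]; rfl
  · rw [vac_hD m (by omega), if_neg (by tauto)]

theorem CL_vac (m n : ℤ) : CL m n (eD ∅) = (if m + n = 0 then (m : ℂ) else 0) • eD ∅ := by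
  rw [vac_of_killed (CL m n (eD ∅))]
  · congr 1
    rw [CL_apply, Finsupp.sub_apply, vac_pair, vac_pair]
    by_cases h : m + n = 0
    · obtain rfl : n = -m := by omega
      rcases lt_trichotomy m 0 with hm | rfl | hm
      · simp [hm, not_lt_of_gt hm]
      · simp
      · simp [hm, not_lt_of_gt hm]
    · have h' : ¬ n + m = 0 := by omega
      simp [h, h']
  · intro k hk
    rw [← CL_comm, aOp_vac k hk, map_zero]

theorem CL_eD (m n : ℤ) (S : Finset ℕ) :
    CL m n (eD S) = (if m + n = 0 then (m : ℂ) else 0) • eD S := by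
  induction S using Finset.induction_on_max with
  | empty => exact CL_vac m n
  | insert a S hS ih =>
    have ha : a ∉ S := fun h => lt_irrefl _ (hS a h)
    have h1 : eD (insert a S) = aOp (a : ℤ) (eD S) := by
      have h2 : sgnD a S = 1 := by
        unfold sgnD
        rw [Finset.filter_false_of_mem]
        · simp
        · intro s hs; exact not_lt_of_gt (hS s hs)
      rw [aOp_cr, if_neg ha, h2, one_smul]
    rw [h1, CL_comm, ih, map_smul]

/-- The Heisenberg operators on the neutral fermion Fock space satisfy
`h_m ∘ h_n − h_n ∘ h_m = m · δ_{m+n,0} · id_F`. -/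
theorem heisenberg_commutation_relations (m n : ℤ) (x : FockD) :
    hD m (hD n x) - hD n (hD m x) = (m : ℂ) • (if m + n = 0 then x else 0) := by
  have h : CL m n x = (if m + n = 0 then (m : ℂ) else 0) • x := by
    induction x using fock_ind with
    | h0 => simp
    | ha x y hx hy => rw [map_add, hx, hy, smul_add]
    | hs c x hx => rw [map_smul, hx, smul_comm]
    | he S => exact CL_eD m n S
  rw [← CL_apply, h]
  split_ifs <;> simp
end
end

section
/- For every finite subset S of ℕ, the basis vector e_S is a simultaneous eigenvector of h_0 and of L^{1/2}_0: one has h_0 e_S = (|{s ∈ S : s odd}| − |{s ∈ S : s even}|) · e_S and L^{1/2}_0 e_S = (∑_{s∈S} (s + 1/2)) · e_S. -/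
noncomputable section

theorem number_op (t : ℕ) (S : Finset ℕ) :
    aOp (t : ℤ) (aOp (-1 - (t : ℤ)) (eD S)) = if t ∈ S then eD S else 0 := by
  rw [aOp_eD]
  have h1 : ¬ (0 ≤ -1 - (t : ℤ)) := by omega
  have h2 : (-(-1 - (t : ℤ)) - 1).toNat = t := by omega
  have h3 : (S.erase t).filter (fun s => t < s) = S.filter (fun s => t < s) := by
    ext s
    simp only [Finset.mem_filter, Finset.mem_erase]
    grind
  unfold aVec
  rw [if_neg h1, h2]
  split_ifs with h
  · rw [map_smul, aOp_eD]
    unfold aVec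
    simp only [Int.toNat_natCast, Nat.cast_nonneg, if_true, Finset.notMem_erase, if_false,
      Finset.insert_erase h, h3, smul_smul]
    rw [← mul_pow]
    simp
  · simp

theorem NO_pos (t : ℕ) (S : Finset ℕ) :
    NO (t : ℤ) (-1 - (t : ℤ)) (eD S) = if t ∈ S then eD S else 0 := by
  rw [← number_op]
  simp [NO]

theorem NO_neg (t : ℕ) (S : Finset ℕ) :
    NO (-1 - (t : ℤ)) (t : ℤ) (eD S) = - if t ∈ S then eD S else 0 := by
  rw [← number_op]
  have h1 : ¬ (0 ≤ -1 - (t : ℤ)) := by omega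
  rw [NO, if_neg h1]
  simp

theorem diag_sum (c : ℤ → ℂ) (S : Finset ℕ) :
    ∑ᶠ i : ℤ, c i • NO i (-1 - i) (eD S) =
      (∑ s ∈ S, (c (s : ℤ) - c (-1 - (s : ℤ)))) • eD S := by
  classical
  have key : Function.support (fun i : ℤ => c i • NO i (-1 - i) (eD S)) ⊆
      ((S.image (fun s : ℕ => (s : ℤ)) ∪ S.image (fun s : ℕ => -1 - (s : ℤ)) : Finset ℤ) :
        Set ℤ) := by
    intro i hi
    rw [Function.mem_support] at hi
    simp only [Finset.coe_union, Finset.coe_image, Set.mem_union, Set.mem_image, Finset.mem_coe]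
    by_cases h : 0 ≤ i
    · obtain ⟨t, rfl⟩ := Int.eq_ofNat_of_zero_le h
      rw [NO_pos] at hi
      left
      refine ⟨t, ?_, rfl⟩
      by_contra ht
      simp [ht] at hi
    · obtain ⟨t, ht⟩ := Int.eq_ofNat_of_zero_le (show 0 ≤ -1 - i by omega)
      obtain rfl : i = -1 - (t : ℤ) := by omega
      rw [show -1 - (-1 - (t : ℤ)) = t by ring, NO_neg] at hi
      right
      refine ⟨t, ?_, rfl⟩
      by_contra ht
      simp [ht] at hi
  rw [finsum_eq_sum_of_support_subset _ key, Finset.sum_union, Finset.sum_image, Finset.sum_image,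
    ← Finset.sum_add_distrib, Finset.sum_smul]
  · refine Finset.sum_congr rfl fun s hs => ?_
    rw [show -1 - (-1 - (s : ℤ)) = s by ring, NO_pos, NO_neg, if_pos hs, sub_smul, smul_neg]
    abel
  · intro a _ b _ h
    simpa using h
  · intro a _ b _ h
    simpa using h
  · rw [Finset.disjoint_left]
    intro x hx hy
    simp only [Finset.mem_image] at hx hy
    obtain ⟨a, -, rfl⟩ := hx
    obtain ⟨b, -, h⟩ := hy
    omega

/-- Each basis vector `e_S` is a simultaneous eigenvector of `h_0` and of `L^{1/2}_0`:
`h_0 e_S = (#{s ∈ S odd} − #{s ∈ S even}) e_S` and `L^{1/2}_0 e_S = (∑_{s∈S} (s + 1/2)) e_S`. -/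
theorem eigenvectors_h0_L0 (S : Finset ℕ) :
    hD 0 (eD S) = (chg S : ℂ) • eD S ∧
    LhalfD 0 (eD S) = (∑ s ∈ S, ((s : ℂ) + 1 / 2)) • eD S := by
  constructor
  · have h := diag_sum (fun i => (-1 : ℂ) ^ (i + 1)) S
    unfold hD
    simp only [mul_zero, zero_sub]
    rw [h, smul_smul]
    congr 1
    rw [Finset.mul_sum, chg, Finset.card_filter, Finset.card_filter]
    push_cast
    rw [← Finset.sum_sub_distrib]
    refine Finset.sum_congr rfl fun s _ => ?_
    rw [show -1 - (s : ℤ) + 1 = -(s : ℤ) by ring, zpow_neg, zpow_add₀ (by norm_num), zpow_natCast]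
    rcases Nat.even_or_odd s with hs | hs
    · simp [hs.neg_one_pow, hs, Nat.not_odd_iff_even.mpr hs]
      norm_num
    · simp [hs.neg_one_pow, hs, Nat.not_even_iff_odd.mpr hs]
      norm_num
  · have h := diag_sum (fun i => (i : ℂ)) S
    unfold LhalfD
    have e : ∀ i : ℤ, -0 - i - 1 = -1 - i := fun i => by ring
    simp only [e]
    rw [h, smul_smul]
    congr 1
    rw [Finset.mul_sum]
    refine Finset.sum_congr rfl fun s _ => ?_
    push_cast
    ring
end
end

section
/- Fix n ∈ ℤ. For every finite subset S of ℕ with c(S) = n, the number ∑_{s∈S}(2s+1) − (2n² + n) is a nonnegative multiple of 4; and for every k ∈ ℕ, the number of finite subsets S of ℕ with c(S) = n and ∑_{s∈S}(2s+1) = 2n² + n + 4k equals p(k), the number of partitions of k into a sum of non-increasing positive integers (with p(0) = 1). -/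
noncomputable section

/-- Weight `w(S) = ∑_{s∈S} (2s+1)` of a finite set `S ⊆ ℕ`. -/
def wgt (S : Finset ℕ) : ℕ := ∑ s ∈ S, (2 * s + 1)

/-- The set of even numbers below `2N`. -/
def evs (N : ℕ) : Finset ℕ := (Finset.range N).image (fun b => 2 * b)

/-- Relabelling of `ℕ` by positions of a truncated Maya diagram. -/
def gmap (N t : ℕ) : ℕ := if t < N then 2 * (N - 1 - t) else 2 * (t - N) + 1

lemma gmap_inj (N : ℕ) : Function.Injective (gmap N) := by
  intro a b h
  unfold gmap at h
  split_ifs at h <;> omega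

lemma mem_evs (N x : ℕ) : x ∈ evs N ↔ Even x ∧ x < 2 * N := by
  simp only [evs, Finset.mem_image, Finset.mem_range]
  constructor
  · rintro ⟨b, hb, rfl⟩
    exact ⟨even_two_mul b, by omega⟩
  · rintro ⟨⟨b, hb⟩, h⟩
    exact ⟨b, by omega, by omega⟩

/-- From finite sets of positions to finite subsets of `ℕ`. -/
def psi (N : ℕ) (T : Finset ℕ) : Finset ℕ := symmDiff (T.image (gmap N)) (evs N)

lemma psi_inj (N : ℕ) : Function.Injective (psi N) := by
  intro A B h
  exact Finset.image_injective (gmap_inj N) (symmDiff_left_injective _ h)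

lemma psi_surj (N : ℕ) (S : Finset ℕ) (hS : ∀ s ∈ S, s < 2 * N) : ∃ T, psi N T = S := by
  have h : ∀ x ∈ symmDiff S (evs N), ∃ t, gmap N t = x := by
    intro x hx
    have hx2 : x < 2 * N := by
      rw [Finset.mem_symmDiff, mem_evs] at hx
      rcases hx with h | h
      · exact hS x h.1
      · exact h.1.2
    rcases Nat.even_or_odd' x with ⟨c, hc | hc⟩
    · refine ⟨N - 1 - c, ?_⟩
      unfold gmap
      split_ifs <;> omega
    · refine ⟨c + N, ?_⟩
      unfold gmap
      split_ifs <;> omega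
  refine ⟨(symmDiff S (evs N)).preimage (gmap N) (gmap_inj N).injOn, ?_⟩
  have : ((symmDiff S (evs N)).preimage (gmap N) (gmap_inj N).injOn).image (gmap N)
      = symmDiff S (evs N) := by
    ext x
    simp only [Finset.mem_image, Finset.mem_preimage]
    constructor
    · rintro ⟨t, ht, rfl⟩
      exact ht
    · intro hx
      obtain ⟨t, rfl⟩ := h x hx
      exact ⟨t, hx, rfl⟩
  rw [psi, this, symmDiff_symmDiff_cancel_right]

lemma sum_symmDiff_signed (U E : Finset ℕ) (w : ℕ → ℤ) :
    ∑ x ∈ symmDiff U E, w x = ∑ x ∈ U, (if x ∈ E then - w x else w x) + ∑ x ∈ E, w x := by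
  have h1 : symmDiff U E = (U \ E) ∪ (E \ U) := rfl
  have h2 : Disjoint (U \ E) (E \ U) := disjoint_sdiff_sdiff
  rw [h1, Finset.sum_union h2, Finset.sum_ite, Finset.filter_mem_eq_inter,
    Finset.filter_notMem_eq_sdiff, Finset.sum_neg_distrib,
    ← Finset.sum_inter_add_sum_sdiff E U w, Finset.inter_comm]
  ring

lemma sum_psi (N : ℕ) (T : Finset ℕ) (w : ℕ → ℤ) :
    ∑ x ∈ psi N T, w x = ∑ t ∈ T, (if t < N then - w (gmap N t) else w (gmap N t))
      + ∑ b ∈ Finset.range N, w (2 * b) := by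
  rw [psi, sum_symmDiff_signed, Finset.sum_image (gmap_inj N).injOn, evs,
    Finset.sum_image (by intro a _ b _ h; simpa using h)]
  congr 1
  apply Finset.sum_congr rfl
  intro t _
  have : gmap N t ∈ (Finset.range N).image (fun b => 2 * b) ↔ t < N := by
    have h0 := mem_evs N (gmap N t)
    rw [evs] at h0
    rw [h0]
    unfold gmap
    split_ifs with h
    · simp only [h, iff_true]
      exact ⟨even_two_mul _, by omega⟩
    · simp [h]
  simp only [this]

lemma chg_eq_sum (S : Finset ℕ) : chg S = ∑ s ∈ S, (if Odd s then (1 : ℤ) else -1) := by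
  rw [Finset.sum_ite, chg]
  simp [Nat.not_odd_iff_even]
  ring

lemma chg_psi (N : ℕ) (T : Finset ℕ) : chg (psi N T) = (T.card : ℤ) - N := by
  rw [chg_eq_sum, sum_psi]
  have h1 : ∀ t ∈ T, (if t < N then - (if Odd (gmap N t) then (1 : ℤ) else -1)
      else (if Odd (gmap N t) then (1 : ℤ) else -1)) = 1 := by
    intro t _
    by_cases h : t < N
    · have : ¬ Odd (gmap N t) := by simp [gmap, h]
      simp [h, this]
    · have : Odd (gmap N t) := by simp [gmap, h]
      simp [h, this]
  have h2 : ∀ b ∈ Finset.range N, (if Odd (2 * b) then (1 : ℤ) else -1) = -1 := by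
    intro b _
    exact if_neg (Nat.not_odd_iff_even.2 (even_two_mul b))
  rw [Finset.sum_congr rfl h1, Finset.sum_congr rfl h2]
  simp
  ring

lemma wgt_psi (N : ℕ) (T : Finset ℕ) :
    (wgt (psi N T) : ℤ)
      = 4 * ((∑ t ∈ T, t : ℕ) : ℤ) + (3 - 4 * N) * T.card + 2 * (N : ℤ) ^ 2 - N := by
  have h0 : (wgt (psi N T) : ℤ) = ∑ s ∈ psi N T, (2 * (s : ℤ) + 1) := by
    rw [wgt]; push_cast; rfl
  rw [h0, sum_psi]
  have h1 : ∀ t ∈ T, (if t < N then - (2 * ((gmap N t : ℕ) : ℤ) + 1)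
      else (2 * ((gmap N t : ℕ) : ℤ) + 1)) = 4 * (t : ℤ) + (3 - 4 * N) := by
    intro t _
    unfold gmap
    split_ifs <;> omega
  have h2 : ∀ M : ℕ, ∑ b ∈ Finset.range M, (2 * ((2 * b : ℕ) : ℤ) + 1) = 2 * (M : ℤ) ^ 2 - M := by
    intro M
    induction M with
    | zero => simp
    | succ M ih => rw [Finset.sum_range_succ, ih]; push_cast; ring
  rw [Finset.sum_congr rfl h1, h2, Finset.sum_add_distrib, ← Finset.mul_sum]
  push_cast
  simp
  ring

/-- The staircase shift of a finite sequence, as a finite set. -/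
def phi (m : ℕ) (f : Fin m → ℕ) : Finset ℕ := Finset.univ.image (fun i => f i + (i : ℕ))

lemma shift_strictMono {m : ℕ} {f : Fin m → ℕ} (hf : Monotone f) :
    StrictMono (fun i => f i + (i : ℕ)) := by
  intro a b hab
  have := hf hab.le
  have h2 : (a : ℕ) < b := hab
  show f a + (a : ℕ) < f b + (b : ℕ)
  omega

lemma phi_card {m : ℕ} {f : Fin m → ℕ} (hf : Monotone f) : (phi m f).card = m := by
  rw [phi, Finset.card_image_of_injective _ (shift_strictMono hf).injective]
  simp

lemma phi_sum {m : ℕ} {f : Fin m → ℕ} (hf : Monotone f) :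
    ∑ t ∈ phi m f, t = ∑ i, f i + ∑ i ∈ Finset.range m, i := by
  rw [phi, Finset.sum_image (shift_strictMono hf).injective.injOn, Finset.sum_add_distrib,
    Fin.sum_univ_eq_sum_range (fun i => i)]

lemma phi_inj {m : ℕ} {f g : Fin m → ℕ} (hf : Monotone f) (hg : Monotone g)
    (h : phi m f = phi m g) : f = g := by
  have h1 : Set.range (fun i => f i + (i : ℕ)) = Set.range (fun i => g i + (i : ℕ)) := by
    have := congrArg (fun A : Finset ℕ => (A : Set ℕ)) h
    simpa [phi] using this
  have h2 := (StrictMono.range_inj (shift_strictMono hf) (shift_strictMono hg)).1 h1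
  funext i
  have := congrFun h2 i
  simpa using this

lemma strictMono_gap {m : ℕ} {e : Fin m → ℕ} (he : StrictMono e) :
    ∀ (d : ℕ) (i j : Fin m), (j : ℕ) = i + d → e i + d ≤ e j := by
  intro d
  induction d with
  | zero => intro i j h; have : i = j := Fin.ext (by omega); subst this; simp
  | succ d ih =>
    intro i j h
    have hj := j.2
    have h1 := ih i ⟨i + d, by omega⟩ rfl
    have h2 : e ⟨i + d, by omega⟩ < e j := he (by rw [Fin.lt_def]; simp; omega)
    omega

lemma phi_surj (T : Finset ℕ) : ∃ f : Fin T.card → ℕ, Monotone f ∧ phi T.card f = T := by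
  set e := T.orderEmbOfFin rfl with he
  have hs : StrictMono e := e.strictMono
  have hi : ∀ i : Fin T.card, (i : ℕ) ≤ e i := by
    intro i
    have hpos := i.2
    have := strictMono_gap hs i ⟨0, by omega⟩ i (by simp)
    omega
  refine ⟨fun i => e i - i, ?_, ?_⟩
  · intro a b hab
    have hab' : (a : ℕ) ≤ b := hab
    have := strictMono_gap hs (b - a) a b (by omega)
    have h3 := hi a
    show e a - (a : ℕ) ≤ e b - (b : ℕ)
    omega
  · rw [phi]
    have : (fun i : Fin T.card => e i - (i : ℕ) + (i : ℕ)) = e := by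
      funext i; have := hi i; omega
    rw [this]
    apply Finset.coe_injective
    simp [he]

lemma ncard_monotone (m k : ℕ) (hk : k ≤ m) :
    {f : Fin m → ℕ | Monotone f ∧ ∑ i, f i = k}.ncard = Fintype.card (Nat.Partition k) := by
  rw [← Nat.card_eq_fintype_card, ← Set.ncard_univ]
  have hms : ∀ f : Fin m → ℕ, Monotone f ∧ ∑ i, f i = k →
      ((List.ofFn f : List ℕ) : Multiset ℕ).sum = k := by
    intro f hf
    rw [Multiset.sum_coe, List.sum_ofFn, hf.2]
  refine Set.ncard_congr (fun f hf => Nat.Partition.ofSums k (List.ofFn f : List ℕ) (hms f hf))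
    (fun _ _ => Set.mem_univ _) ?_ ?_
  · intro f g hf hg h
    have h1 := congrArg Nat.Partition.parts h
    simp only [Nat.Partition.ofSums] at h1
    have hz : ∀ s : Multiset ℕ, s = Multiset.replicate (s.card - (s.filter (· ≠ 0)).card) 0
        + s.filter (· ≠ 0) := by
      intro s
      have ha := Multiset.filter_add_not (· = 0) s
      have hb : s.filter (· = 0) = Multiset.replicate (s.filter (· = 0)).card 0 :=
        Multiset.eq_replicate_card.2 (fun b hb => (Multiset.mem_filter.1 hb).2)
      have hc := congrArg Multiset.card ha
      rw [Multiset.card_add] at hc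
      have hd : s.card - (s.filter (· ≠ 0)).card = (s.filter (· = 0)).card := by
        simp only [ne_eq]; omega
      rw [hd, ← hb]
      exact ha.symm
    have h2 : ((List.ofFn f : List ℕ) : Multiset ℕ) = (List.ofFn g : List ℕ) := by
      rw [hz (List.ofFn f : List ℕ), hz (List.ofFn g : List ℕ), h1]
      simp
    have h3 := List.Perm.eq_of_sortedLE hf.1.sortedLE_ofFn hg.1.sortedLE_ofFn
      (Multiset.coe_eq_coe.1 h2)
    exact List.ofFn_injective h3
  · intro p _
    have hc : p.parts.card ≤ m := by
      have h := Multiset.card_nsmul_le_sum (s := p.parts) (a := 1) (fun x hx => p.parts_pos hx)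
      rw [p.parts_sum] at h
      simp at h
      omega
    set s : Multiset ℕ := Multiset.replicate (m - p.parts.card) 0 + p.parts with hs
    have hlen : (s.sort (· ≤ ·)).length = m := by
      rw [Multiset.length_sort, hs, Multiset.card_add, Multiset.card_replicate]
      omega
    obtain ⟨f, hf⟩ : ∃ f : Fin m → ℕ, List.ofFn f = s.sort (· ≤ ·) := by
      generalize s.sort (· ≤ ·) = l at hlen
      subst hlen
      exact ⟨l.get, List.ofFn_get l⟩
    have hfs : ((List.ofFn f : List ℕ) : Multiset ℕ) = s := by rw [hf, Multiset.sort_eq]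
    refine ⟨f, ⟨?_, ?_⟩, ?_⟩
    · rw [← List.sortedLE_ofFn_iff, hf]
      exact (Multiset.pairwise_sort _ _).sortedLE
    · rw [← List.sum_ofFn, ← Multiset.sum_coe, hfs, hs]
      simp [p.parts_sum]
    · apply Nat.Partition.ext
      simp only [Nat.Partition.ofSums]
      rw [hfs, hs, Multiset.filter_add, Multiset.filter_eq_nil.2, zero_add,
        Multiset.filter_eq_self.2]
      · intro a ha
        exact (p.parts_pos ha).ne'
      · intro a ha
        simp [Multiset.eq_of_mem_replicate ha]

lemma ncard_finsets (m k : ℕ) (hk : k ≤ m) :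
    {T : Finset ℕ | T.card = m ∧ ∑ t ∈ T, t = k + ∑ i ∈ Finset.range m, i}.ncard
      = Fintype.card (Nat.Partition k) := by
  rw [← ncard_monotone m k hk]
  symm
  apply Set.BijOn.ncard_eq (f := phi m)
  refine ⟨?_, ?_, ?_⟩
  · rintro f ⟨hf, hs⟩
    exact ⟨phi_card hf, by rw [phi_sum hf, hs]⟩
  · rintro f ⟨hf, _⟩ g ⟨hg, _⟩ h
    exact phi_inj hf hg h
  · rintro T ⟨rfl, hT⟩
    obtain ⟨f, hf, hfT⟩ := phi_surj T
    refine ⟨f, ⟨hf, ?_⟩, hfT⟩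
    have := phi_sum hf
    rw [hfT] at this
    omega

lemma sum_range_int (m : ℕ) : 2 * ((∑ i ∈ Finset.range m, i : ℕ) : ℤ) = (m : ℤ) ^ 2 - m := by
  induction m with
  | zero => simp
  | succ m ih => rw [Finset.sum_range_succ]; push_cast at *; linarith

/-- The weight in terms of the excess over the staircase. -/
lemma wgt_psi_excess (N : ℕ) (T : Finset ℕ) (n : ℤ) (h : chg (psi N T) = n) :
    (wgt (psi N T) : ℤ) = 2 * n ^ 2 + n
      + 4 * (((∑ t ∈ T, t : ℕ) : ℤ) - ((∑ i ∈ Finset.range T.card, i : ℕ) : ℤ)) := by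
  rw [chg_psi] at h
  rw [wgt_psi]
  have h1 := sum_range_int T.card
  have h2 : (T.card : ℤ) = n + N := by linarith
  rw [mul_sub, show (4 : ℤ) * ((∑ i ∈ Finset.range T.card, i : ℕ) : ℤ)
    = 2 * (2 * ((∑ i ∈ Finset.range T.card, i : ℕ) : ℤ)) by ring, h1, h2]
  ring

lemma lt_of_mem_wgt (S : Finset ℕ) (s : ℕ) (hs : s ∈ S) : 2 * s + 1 ≤ wgt S :=
  Finset.single_le_sum (f := fun s => 2 * s + 1) (fun _ _ => Nat.zero_le _) hs

/-- For every finite `S ⊆ ℕ` of charge `n`, the number `∑_{s∈S}(2s+1) − (2n² + n)` is a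
nonnegative multiple of `4`; and the number of finite subsets of charge `n` and weight
`2n² + n + 4k` equals `p(k)`, the number of partitions of `k`. -/
theorem charge_energy_grading_count (n : ℤ) :
    (∀ S : Finset ℕ, chg S = n →
      2 * n ^ 2 + n ≤ (wgt S : ℤ) ∧ (4 : ℤ) ∣ ((wgt S : ℤ) - (2 * n ^ 2 + n))) ∧
    (∀ k : ℕ,
      {S : Finset ℕ | chg S = n ∧ (wgt S : ℤ) = 2 * n ^ 2 + n + 4 * k}.ncard
        = Fintype.card (Nat.Partition k)) := by
  constructor
  · intro S hS
    obtain ⟨N, hN⟩ : ∃ N : ℕ, ∀ s ∈ S, s < 2 * N :=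
      ⟨wgt S, fun s hs => by have := lt_of_mem_wgt S s hs; omega⟩
    obtain ⟨T, rfl⟩ := psi_surj N S hN
    have h := wgt_psi_excess _ T n hS
    obtain ⟨f, hf, hfT⟩ := phi_surj T
    have h2 := phi_sum hf
    rw [hfT] at h2
    rw [h, h2]
    constructor
    · push_cast
      have : (0 : ℤ) ≤ ∑ i, (f i : ℤ) := Finset.sum_nonneg (fun _ _ => Int.natCast_nonneg _)
      linarith
    · exact ⟨_, add_sub_cancel_left _ _⟩
  · intro k
    obtain ⟨N, hN⟩ : ∃ N : ℕ, N = (2 * n ^ 2 + n + 4 * k).toNat + k + n.natAbs := ⟨_, rfl⟩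
    obtain ⟨m, hm⟩ : ∃ m : ℕ, (m : ℤ) = n + N := ⟨(n + N).toNat, by omega⟩
    have hkm : k ≤ m := by omega
    rw [← ncard_finsets m k hkm]
    symm
    apply Set.BijOn.ncard_eq (f := psi N)
    refine ⟨?_, (psi_inj N).injOn, ?_⟩
    · rintro T ⟨hT, hs⟩
      have hc : chg (psi N T) = n := by rw [chg_psi, hT]; omega
      refine ⟨hc, ?_⟩
      rw [wgt_psi_excess N T n hc, hT, hs]
      push_cast
      ring
    · rintro S ⟨hS, hw⟩
      obtain ⟨T, rfl⟩ := psi_surj N S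
        (fun s hs => by have := lt_of_mem_wgt S s hs; omega)
      have h := wgt_psi_excess N T n hS
      have hc : T.card = m := by
        rw [chg_psi] at hS
        omega
      refine ⟨T, ⟨hc, ?_⟩, rfl⟩
      rw [hc] at h
      omega
end
end

section
/- For every n, m ∈ ℤ the Heisenberg operator h_m maps the charge-n component F_{(n)} into itself; moreover h_m v_n = 0 for every m ≥ 1, and h_0 v_n = n · v_n. (Thus each F_{(n)} is a highest weight module for the Heisenberg algebra with highest weight vector v_n of weight n.) -/
noncomputable section

theorem eD_mem (S : Finset ℕ) (n : ℤ) (h : chg S = n) : eD S ∈ FockComp n :=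
  Submodule.subset_span ⟨S, h, rfl⟩

/-- The charge carried by a single mode. -/
def dch (m : ℤ) : ℤ := if Even m then -1 else 1

theorem chg_insert (t : ℕ) (S : Finset ℕ) (h : t ∉ S) :
    chg (insert t S) = chg S + (if Even t then -1 else 1) := by
  unfold chg
  by_cases ht : Even t
  · have ho : ¬ Odd t := Nat.not_odd_iff_even.mpr ht
    rw [Finset.filter_insert, Finset.filter_insert, if_neg ho, if_pos ht, if_pos ht,
      Finset.card_insert_of_notMem (by simp [h])]
    push_cast; ring
  · have ho : Odd t := Nat.not_even_iff_odd.mp ht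
    rw [Finset.filter_insert, Finset.filter_insert, if_pos ho, if_neg ht, if_neg ht,
      Finset.card_insert_of_notMem (by simp [h])]
    push_cast; ring

theorem aVec_mem (m : ℤ) (S : Finset ℕ) : aVec m S ∈ FockComp (chg S + dch m) := by
  unfold aVec
  split_ifs with h0 h1 h2
  · exact Submodule.zero_mem _
  · apply Submodule.smul_mem
    apply eD_mem
    rw [chg_insert _ _ h1, dch]
    have : Even m.toNat ↔ Even m := by
      rw [Nat.even_iff, Int.even_iff]; omega
    simp only [this]
  · apply Submodule.smul_mem
    apply eD_mem
    have := chg_insert (-m - 1).toNat (S.erase (-m - 1).toNat) (by simp)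
    rw [Finset.insert_erase h2] at this
    rw [this, dch]
    have e : Even (-m - 1).toNat ↔ ¬ Even m := by
      rw [Nat.even_iff, Int.even_iff]; omega
    simp only [e]
    by_cases hm : Even m <;> simp [hm]
  · exact Submodule.zero_mem _

theorem aOp_mem (m n : ℤ) (x : FockD) (hx : x ∈ FockComp n) :
    aOp m x ∈ FockComp (n + dch m) := by
  suffices h : FockComp n ≤ (FockComp (n + dch m)).comap (aOp m) from h hx
  refine Submodule.span_le.mpr ?_
  rintro _ ⟨S, rfl, rfl⟩
  simp only [Submodule.comap_coe, Set.mem_preimage, SetLike.mem_coe, aOp_eD]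
  exact aVec_mem m S

theorem NO_mem (i j n : ℤ) (hij : dch i + dch j = 0) (x : FockD) (hx : x ∈ FockComp n) :
    NO i j x ∈ FockComp n := by
  unfold NO
  split_ifs
  · have := aOp_mem i _ _ (aOp_mem j n x hx)
    rw [show n + dch j + dch i = n by omega] at this
    exact this
  · have := aOp_mem j _ _ (aOp_mem i n x hx)
    rw [show n + dch i + dch j = n by omega] at this
    exact Submodule.neg_mem _ this

theorem dch_add (m i : ℤ) : dch i + dch (-2 * m - 1 - i) = 0 := by
  unfold dch
  have : Even (-2 * m - 1 - i) ↔ ¬ Even i := by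
    rw [Int.even_iff, Int.even_iff]; omega
  simp only [this]
  by_cases h : Even i <;> simp [h]

theorem hD_mem (n m : ℤ) (x : FockD) (hx : x ∈ FockComp n) : hD m x ∈ FockComp n := by
  unfold hD
  apply Submodule.smul_mem
  refine finsum_induction (· ∈ FockComp n) (Submodule.zero_mem _)
    (fun _ _ => Submodule.add_mem _) fun i => ?_
  exact Submodule.smul_mem _ _ (NO_mem _ _ n (dch_add m i) x hx)

theorem mem_vSet (n : ℤ) (t : ℕ) : t ∈ vSet n ↔
    (0 ≤ n ∧ t % 2 = 1 ∧ (t : ℤ) < 2 * n) ∨ (n < 0 ∧ t % 2 = 0 ∧ (t : ℤ) < -2 * n) := by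
  unfold vSet
  split_ifs with h
  · simp only [Finset.mem_image, Finset.mem_range]
    constructor
    · rintro ⟨a, ha, rfl⟩; omega
    · intro h; exact ⟨t / 2, by omega, by omega⟩
  · simp only [Finset.mem_image, Finset.mem_range]
    constructor
    · rintro ⟨a, ha, rfl⟩; omega
    · intro h; exact ⟨t / 2, by omega, by omega⟩

/-- If removing `-j-1` and then applying mode `i` is impossible, the product vanishes. -/
theorem comp_zero (i j : ℤ) (S : Finset ℕ) (hj : j < 0)
    (h : (-j - 1).toNat ∈ S →
      (0 ≤ i ∧ i.toNat ∈ S.erase (-j - 1).toNat) ∨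
        (i < 0 ∧ (-i - 1).toNat ∉ S.erase (-j - 1).toNat)) :
    aOp i (aOp j (eD S)) = 0 := by
  rw [aOp_eD]
  conv_lhs => rw [aVec, if_neg (by omega)]
  split_ifs with hS
  · rw [map_smul, aOp_eD]
    rcases h hS with ⟨h0, h1⟩ | ⟨h0, h1⟩
    · rw [aVec, if_pos h0, if_pos h1, smul_zero]
    · rw [aVec, if_neg (by omega), if_neg h1, smul_zero]
  · simp

theorem comp_vac (n i j m : ℤ) (hm : 1 ≤ m) (hij : i + j = -2 * m - 1) (hj : j < 0) :
    aOp i (aOp j (eD (vSet n))) = 0 := by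
  apply comp_zero _ _ _ hj
  intro h
  simp only [Finset.mem_erase, mem_vSet] at *
  omega

theorem hD_vac_s3 (n m : ℤ) (hm : 1 ≤ m) : hD m (vD n) = 0 := by
  unfold hD
  rw [finsum_eq_zero_of_forall_eq_zero, smul_zero]
  intro i
  have : NO i (-2 * m - 1 - i) (vD n) = 0 := by
    unfold NO vD
    split_ifs with h
    · exact comp_vac n i _ m hm (by ring) (by omega)
    · simp only [LinearMap.neg_apply, LinearMap.comp_apply]
      rw [comp_vac n _ i m hm (by ring) (by omega), neg_zero]
  rw [this, smul_zero]

theorem num_op (i : ℕ) (S : Finset ℕ) :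
    aOp (i : ℤ) (aOp (-1 - (i : ℤ)) (eD S)) = if i ∈ S then eD S else 0 := by
  rw [aOp_eD]
  conv_lhs => rw [aVec, if_neg (by omega)]
  have e : (-(-1 - (i : ℤ)) - 1).toNat = i := by omega
  rw [e]
  split_ifs with h
  · rw [map_smul, aOp_eD, aVec, if_pos (by omega), Int.toNat_natCast, if_neg (by simp),
      Finset.insert_erase h, smul_smul, ← pow_add]
    have : ((S.erase i).filter fun s => i < s) = S.filter fun s => i < s := by
      ext s
      simp only [Finset.mem_filter, Finset.mem_erase]
      constructor
      · rintro ⟨⟨_, a⟩, b⟩; exact ⟨a, b⟩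
      · rintro ⟨a, b⟩; exact ⟨⟨by omega, a⟩, b⟩
    rw [this, Even.neg_one_pow ⟨_, rfl⟩, one_smul]
  · simp

theorem sum_sign (S : Finset ℕ) : ∑ s ∈ S, (-1 : ℂ) ^ (s + 1) = (chg S : ℂ) := by
  induction S using Finset.induction_on with
  | empty => simp [chg]
  | insert t S h ih =>
    rw [Finset.sum_insert h, ih, chg_insert t S h]
    by_cases ht : Even t
    · rw [if_pos ht, Odd.neg_one_pow (Even.add_one ht)]; push_cast; ring
    · rw [if_neg ht, Even.neg_one_pow (Odd.add_one (Nat.not_even_iff_odd.mp ht))]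
      push_cast; ring

theorem term_pos (S : Finset ℕ) (s : ℕ) :
    ((-1 : ℂ) ^ ((s : ℤ) + 1)) • NO s (-2 * 0 - 1 - (s : ℤ)) (eD S) =
      if s ∈ S then ((-1 : ℂ) ^ (s + 1)) • eD S else 0 := by
  rw [NO, if_pos (by omega), LinearMap.comp_apply,
    show -2 * 0 - 1 - (s : ℤ) = -1 - (s : ℤ) by ring, num_op]
  split_ifs
  · congr 1
  · simp

theorem term_neg (S : Finset ℕ) (s : ℕ) :
    ((-1 : ℂ) ^ ((-1 - (s : ℤ)) + 1)) • NO (-1 - (s : ℤ)) (-2 * 0 - 1 - (-1 - (s : ℤ))) (eD S) =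
      if s ∈ S then ((-1 : ℂ) ^ (s + 1)) • eD S else 0 := by
  rw [NO, if_neg (by omega), LinearMap.neg_apply, LinearMap.comp_apply,
    show -2 * 0 - 1 - (-1 - (s : ℤ)) = (s : ℤ) by ring, num_op]
  split_ifs
  · rw [show (-1 - (s : ℤ)) + 1 = -(s : ℤ) by ring, zpow_neg, zpow_natCast, smul_neg, ← neg_smul]
    congr 1
    rw [pow_succ, ← inv_pow]
    norm_num
  · simp

theorem hD_zero (S : Finset ℕ) : hD 0 (eD S) = (chg S : ℂ) • eD S := by
  unfold hD
  have key : ∑ᶠ i : ℤ, ((-1 : ℂ) ^ (i + 1)) • NO i (-2 * 0 - 1 - i) (eD S) =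
      ∑ i ∈ S.image (fun s : ℕ => (s : ℤ)) ∪ S.image (fun s : ℕ => -1 - (s : ℤ)),
        ((-1 : ℂ) ^ (i + 1)) • NO i (-2 * 0 - 1 - i) (eD S) := by
    apply finsum_eq_sum_of_support_subset
    intro i hi
    rw [Function.mem_support] at hi
    simp only [Finset.coe_union, Finset.coe_image, Set.mem_union, Set.mem_image, Finset.mem_coe]
    rcases le_or_gt 0 i with h | h
    · left
      obtain ⟨s, rfl⟩ := Int.eq_ofNat_of_zero_le h
      refine ⟨s, ?_, rfl⟩
      by_contra hs
      exact hi (by rw [term_pos, if_neg hs])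
    · right
      obtain ⟨s, hs'⟩ := Int.eq_ofNat_of_zero_le (show 0 ≤ -1 - i by omega)
      obtain rfl : i = -1 - (s : ℤ) := by omega
      refine ⟨s, ?_, rfl⟩
      by_contra hs
      exact hi (by rw [term_neg, if_neg hs])
  rw [key, Finset.sum_union, Finset.sum_image, Finset.sum_image]
  · simp only [term_pos, term_neg]
    rw [Finset.sum_congr rfl (g := fun s => ((-1 : ℂ) ^ (s + 1)) • eD S)
      (fun s hs => if_pos hs), ← Finset.sum_smul, sum_sign, ← add_smul, smul_smul]
    congr 1
    ring
  · intro a _ b _ h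
    simp only at h
    omega
  · intro a _ b _ h
    simp only at h
    omega
  · rw [Finset.disjoint_left]
    simp only [Finset.mem_image]
    rintro _ ⟨a, _, rfl⟩ ⟨b, _, h⟩
    omega

theorem chg_vSet (n : ℤ) : chg (vSet n) = n := by
  unfold chg
  rcases le_or_gt 0 n with h | h
  · have h1 : (vSet n).filter (fun s => Odd s) = vSet n := by
      apply Finset.filter_true_of_mem
      intro t ht; rw [mem_vSet] at ht; rw [Nat.odd_iff]; omega
    have h2 : (vSet n).filter (fun s => Even s) = ∅ := by
      apply Finset.filter_false_of_mem
      intro t ht; rw [mem_vSet] at ht; rw [Nat.even_iff]; omega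
    rw [h1, h2, vSet, if_pos h, Finset.card_image_of_injective _ (fun a b (h : 2 * a + 1 = 2 * b + 1) => by omega)]
    simp [h]
  · have h1 : (vSet n).filter (fun s => Odd s) = ∅ := by
      apply Finset.filter_false_of_mem
      intro t ht; rw [mem_vSet] at ht; rw [Nat.odd_iff]; omega
    have h2 : (vSet n).filter (fun s => Even s) = vSet n := by
      apply Finset.filter_true_of_mem
      intro t ht; rw [mem_vSet] at ht; rw [Nat.even_iff]; omega
    rw [h1, h2, vSet, if_neg (by omega), Finset.card_image_of_injective _ (fun a b (h : 2 * a = 2 * b) => by omega)]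
    simp only [Finset.card_empty, Finset.card_range]
    omega

/-- Each Heisenberg operator `h_m` maps the charge-`n` component `F_{(n)}` into itself;
moreover `h_m v_n = 0` for `m ≥ 1` and `h_0 v_n = n · v_n`, so `F_{(n)}` is a highest weight
module for the Heisenberg algebra with highest weight vector `v_n` of weight `n`. -/
theorem heisenberg_highest_weight (n : ℤ) :
    (∀ m : ℤ, ∀ x ∈ FockComp n, hD m x ∈ FockComp n) ∧
    (∀ m : ℤ, 1 ≤ m → hD m (vD n) = 0) ∧
    hD 0 (vD n) = (n : ℂ) • vD n := by
  refine ⟨fun m x hx => hD_mem n m x hx, fun m hm => hD_vac_s3 n m hm, ?_⟩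
  rw [vD, hD_zero, chg_vSet]
end
end

section
/- There exists a ℂ-linear bijection T : F → F^{⊗1} such that T(e_∅) = e_{(∅,∅)} and, for all j ∈ ℤ and all x ∈ F: T(a_{2j+1} x) = ψ⁺_{−j−1}(T x) and T(a_{2j} x) = ψ⁻_{−j−1}(T x). (This is the boson-fermion correspondence of type D-A at the level of Fock spaces: the odd fermion modes of F^{⊗1/2} are identified with the ψ⁺-modes of F^{⊗1} and the even modes with the ψ⁻-modes, corresponding to (φ^D(z) − φ^D(−z))/2z ↦ ψ⁺(z²) and (φ^D(z) + φ^D(−z))/2 ↦ ψ⁻(z²).) -/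
noncomputable section

/-- The Fock space `F^{⊗1}` of a pair of charged free fermions: basis
`{e_{(A,B)} : A, B finite subsets of ℕ}`. -/
abbrev FockA : Type := (Finset ℕ × Finset ℕ) →₀ ℂ

/-- Basis vector `e_{(A,B)}`. -/
def eA (A B : Finset ℕ) : FockA := Finsupp.single (A, B) 1

/-- Action of the mode `ψ⁺_m` on the basis vector `e_{(A,B)}`
(`ψ⁺_{−a−1}` creates, `ψ⁺_a` annihilates, `a ∈ ℕ`). -/
def psiPVec (m : ℤ) (p : Finset ℕ × Finset ℕ) : FockA :=
  if m < 0 then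
    if (-m - 1).toNat ∈ p.1 then 0
    else ((-1 : ℂ) ^ (p.1.filter (fun x => (-m - 1).toNat < x)).card) •
      eA (insert ((-m - 1).toNat) p.1) p.2
  else
    if m.toNat ∈ p.2 then
      ((-1 : ℂ) ^ (p.1.card + (p.2.filter (fun y => m.toNat < y)).card)) •
        eA p.1 (p.2.erase m.toNat)
    else 0

/-- Action of the mode `ψ⁻_m` on the basis vector `e_{(A,B)}`. -/
def psiMVec (m : ℤ) (p : Finset ℕ × Finset ℕ) : FockA :=
  if m < 0 then
    if (-m - 1).toNat ∈ p.2 then 0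
    else ((-1 : ℂ) ^ (p.1.card + (p.2.filter (fun y => (-m - 1).toNat < y)).card)) •
      eA p.1 (insert ((-m - 1).toNat) p.2)
  else
    if m.toNat ∈ p.1 then
      ((-1 : ℂ) ^ (p.1.filter (fun x => m.toNat < x)).card) • eA (p.1.erase m.toNat) p.2
    else 0

/-- The mode `ψ⁺_m` as a linear operator on `F^{⊗1}`. -/
def psiP (m : ℤ) : FockA →ₗ[ℂ] FockA :=
  Finsupp.lsum ℂ fun p => LinearMap.toSpanSingleton ℂ FockA (psiPVec m p)

/-- The mode `ψ⁻_m` as a linear operator on `F^{⊗1}`. -/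
def psiM (m : ℤ) : FockA →ₗ[ℂ] FockA :=
  Finsupp.lsum ℂ fun p => LinearMap.toSpanSingleton ℂ FockA (psiMVec m p)

/-- Heisenberg operator `h^A_n = ∑_{j∈ℤ} :ψ⁺_j ψ⁻_{n−j−1}:` on `F^{⊗1}`, where
`:ψ⁺_j ψ⁻_k: = ψ⁺_j ψ⁻_k` for `j ≤ −1` and `= −ψ⁻_k ψ⁺_j` for `j ≥ 0`. -/
def hA (n : ℤ) (x : FockA) : FockA :=
  ∑ᶠ j : ℤ, if j ≤ -1 then psiP j (psiM (n - j - 1) x) else -(psiM (n - j - 1) (psiP j x))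

/-! ## Auxiliary material -/

/-- The half-indices of the odd elements of `S`. -/
def oddPart (S : Finset ℕ) : Finset ℕ :=
  S.preimage (fun a => 2 * a + 1) (fun a _ b _ h => by simp at h; omega)

/-- The half-indices of the even elements of `S`. -/
def evenPart (S : Finset ℕ) : Finset ℕ :=
  S.preimage (fun a => 2 * a) (fun a _ b _ h => by simp at h; omega)

theorem mem_oddPart (S : Finset ℕ) (a : ℕ) : a ∈ oddPart S ↔ 2 * a + 1 ∈ S := by
  exact Finset.mem_preimage

theorem mem_evenPart (S : Finset ℕ) (a : ℕ) : a ∈ evenPart S ↔ 2 * a ∈ S := by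
  exact Finset.mem_preimage

/-- Merge a pair of finite sets into one. -/
def mergeSet (p : Finset ℕ × Finset ℕ) : Finset ℕ :=
  p.1.image (fun a => 2 * a + 1) ∪ p.2.image (fun a => 2 * a)

theorem odd_mem_mergeSet (p : Finset ℕ × Finset ℕ) (a : ℕ) :
    2 * a + 1 ∈ mergeSet p ↔ a ∈ p.1 := by
  simp only [mergeSet, Finset.mem_union, Finset.mem_image]
  constructor
  · rintro (⟨b, hb, h⟩ | ⟨b, hb, h⟩)
    · obtain rfl : b = a := by omega
      exact hb
    · omega
  · intro h
    exact Or.inl ⟨a, h, rfl⟩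

theorem even_mem_mergeSet (p : Finset ℕ × Finset ℕ) (a : ℕ) :
    2 * a ∈ mergeSet p ↔ a ∈ p.2 := by
  simp only [mergeSet, Finset.mem_union, Finset.mem_image]
  constructor
  · rintro (⟨b, hb, h⟩ | ⟨b, hb, h⟩)
    · omega
    · obtain rfl : b = a := by omega
      exact hb
  · intro h
    exact Or.inr ⟨a, h, rfl⟩

theorem mergeSet_parts (S : Finset ℕ) : mergeSet (oddPart S, evenPart S) = S := by
  ext n
  rcases Nat.even_or_odd' n with ⟨k, rfl | rfl⟩
  · rw [even_mem_mergeSet, mem_evenPart]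
  · rw [odd_mem_mergeSet, mem_oddPart]

/-- Splitting into odd and even parts. -/
def splitEquiv : Finset ℕ ≃ Finset ℕ × Finset ℕ where
  toFun S := (oddPart S, evenPart S)
  invFun := mergeSet
  left_inv := mergeSet_parts
  right_inv p := by
    ext a
    · simp [mem_oddPart, odd_mem_mergeSet]
    · simp [mem_evenPart, even_mem_mergeSet]

theorem card_filter_split (S : Finset ℕ) (P : ℕ → Prop) [DecidablePred P] :
    (S.filter P).card = ((oddPart S).filter (fun a => P (2 * a + 1))).card
      + ((evenPart S).filter (fun a => P (2 * a))).card := by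
  conv_lhs => rw [← mergeSet_parts S]
  rw [mergeSet, Finset.filter_union, Finset.card_union_of_disjoint, Finset.filter_image,
    Finset.filter_image, Finset.card_image_of_injective, Finset.card_image_of_injective]
  · intro a b h
    simp at h
    omega
  · intro a b h
    simp at h
    omega
  · rw [Finset.disjoint_left]
    intro n h1 h2
    simp only [Finset.mem_filter, Finset.mem_image] at h1 h2
    obtain ⟨⟨a, -, ha⟩, -⟩ := h1
    obtain ⟨⟨b, -, hb⟩, -⟩ := h2
    omega

/-- Number of inversions between the two parts. -/
def invNum (A B : Finset ℕ) : ℕ := ∑ a ∈ A, ∑ b ∈ B, if a < b then 1 else 0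

theorem invNum_insert_left (A B : Finset ℕ) (j : ℕ) (h : j ∉ A) :
    invNum (insert j A) B = invNum A B + (B.filter (fun b => j < b)).card := by
  rw [invNum, Finset.sum_insert h, Finset.card_filter, add_comm, invNum]

theorem invNum_insert_right (A B : Finset ℕ) (j : ℕ) (h : j ∉ B) :
    invNum A (insert j B) = invNum A B + (A.filter (fun a => a < j)).card := by
  simp only [invNum, Finset.sum_insert h, Finset.card_filter, Finset.sum_add_distrib]
  rw [add_comm]

theorem card_split_lt (A : Finset ℕ) (j : ℕ) :
    A.card = (A.filter (fun a => a < j)).card + (A.filter (fun a => j ≤ a)).card := by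
  rw [← Finset.card_filter_add_card_filter_not (s := A) (fun a => a < j)]
  simp only [not_lt]

theorem oddPart_insert_odd (S : Finset ℕ) (j : ℕ) :
    oddPart (insert (2 * j + 1) S) = insert j (oddPart S) := by
  ext a; simp [mem_oddPart]

theorem evenPart_insert_odd (S : Finset ℕ) (j : ℕ) :
    evenPart (insert (2 * j + 1) S) = evenPart S := by
  ext a; simp only [mem_evenPart, Finset.mem_insert]
  exact or_iff_right (by omega)

theorem evenPart_insert_even (S : Finset ℕ) (j : ℕ) :
    evenPart (insert (2 * j) S) = insert j (evenPart S) := by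
  ext a; simp [mem_evenPart]

theorem oddPart_insert_even (S : Finset ℕ) (j : ℕ) :
    oddPart (insert (2 * j) S) = oddPart S := by
  ext a; simp only [mem_oddPart, Finset.mem_insert]
  exact or_iff_right (by omega)

theorem oddPart_erase_odd (S : Finset ℕ) (j : ℕ) :
    oddPart (S.erase (2 * j + 1)) = (oddPart S).erase j := by
  ext a; simp [mem_oddPart]

theorem evenPart_erase_odd (S : Finset ℕ) (j : ℕ) :
    evenPart (S.erase (2 * j + 1)) = evenPart S := by
  ext a; simp only [mem_evenPart, Finset.mem_erase]
  exact and_iff_right (by omega)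

theorem evenPart_erase_even (S : Finset ℕ) (j : ℕ) :
    evenPart (S.erase (2 * j)) = (evenPart S).erase j := by
  ext a; simp [mem_evenPart]

theorem oddPart_erase_even (S : Finset ℕ) (j : ℕ) :
    oddPart (S.erase (2 * j)) = oddPart S := by
  ext a; simp only [mem_oddPart, Finset.mem_erase]
  exact and_iff_right (by omega)

theorem card_gt_odd (S : Finset ℕ) (j : ℕ) :
    (S.filter (fun s => 2 * j + 1 < s)).card = ((oddPart S).filter (fun a => j < a)).card
      + ((evenPart S).filter (fun a => j < a)).card := by
  rw [card_filter_split]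
  congr 2 <;> (apply Finset.filter_congr; intros; omega)

theorem card_gt_even (S : Finset ℕ) (j : ℕ) :
    (S.filter (fun s => 2 * j < s)).card = ((oddPart S).filter (fun a => j ≤ a)).card
      + ((evenPart S).filter (fun a => j < a)).card := by
  rw [card_filter_split]
  congr 2 <;> (apply Finset.filter_congr; intros; omega)

/-- The diagonal sign operator. -/
def signOp : FockA →ₗ[ℂ] FockA :=
  Finsupp.lsum ℂ fun p => LinearMap.toSpanSingleton ℂ FockA
    (((-1 : ℂ) ^ invNum p.1 p.2) • eA p.1 p.2)

theorem signOp_eA (A B : Finset ℕ) : signOp (eA A B) = ((-1 : ℂ) ^ invNum A B) • eA A B := by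
  simp [signOp, eA]

theorem signOp_invol : Function.Involutive signOp := by
  intro x
  have : signOp.comp signOp = LinearMap.id := by
    apply Finsupp.lhom_ext'
    rintro ⟨A, B⟩
    apply LinearMap.ext_ring
    change signOp (signOp (eA A B)) = eA A B
    rw [signOp_eA, map_smul, signOp_eA, smul_smul, ← mul_pow]
    simp
  exact LinearMap.congr_fun this x

/-- The isomorphism. -/
def corrT : FockD ≃ₗ[ℂ] FockA :=
  (Finsupp.domLCongr splitEquiv).trans (LinearEquiv.ofInvolutive signOp signOp_invol)

theorem corrT_eD (S : Finset ℕ) : corrT (eD S) =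
    ((-1 : ℂ) ^ invNum (oddPart S) (evenPart S)) • eA (oddPart S) (evenPart S) := by
  rw [← signOp_eA]
  simp [corrT, eD, eA, splitEquiv]

theorem psiP_eA (m : ℤ) (A B : Finset ℕ) : psiP m (eA A B) = psiPVec m (A, B) := by
  simp [psiP, eA]

theorem psiM_eA (m : ℤ) (A B : Finset ℕ) : psiM m (eA A B) = psiMVec m (A, B) := by
  simp [psiM, eA]

theorem neg_one_pow_eq_of_add {m n : ℕ} (k : ℕ) (h : m + n = 2 * k) :
    (-1 : ℂ) ^ m = (-1 : ℂ) ^ n := by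
  have h2 : (-1 : ℂ) ^ m * (-1 : ℂ) ^ n = 1 := by rw [← pow_add, h, pow_mul]; simp
  have h3 : (-1 : ℂ) ^ n * (-1 : ℂ) ^ n = 1 := by rw [← pow_add, ← two_mul, pow_mul]; simp
  have h4 : (-1 : ℂ) ^ n ≠ 0 := by simp
  exact mul_right_cancel₀ h4 (h2.trans h3.symm)

theorem smul_congr_sign {a b c d : ℕ} (v : FockA) (h : (a + b) % 2 = (c + d) % 2) :
    ((-1 : ℂ) ^ a) • ((-1 : ℂ) ^ b) • v = ((-1 : ℂ) ^ c) • ((-1 : ℂ) ^ d) • v := by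
  rw [smul_smul, smul_smul, ← pow_add, ← pow_add,
    neg_one_pow_eq_of_add (m := a + b) (n := c + d) ((a + b + (c + d)) / 2) (by omega)]

theorem basis_odd (j : ℤ) (S : Finset ℕ) :
    corrT (aOp (2 * j + 1) (eD S)) = psiP (-j - 1) (corrT (eD S)) := by
  rw [aOp_eD, corrT_eD, map_smul, psiP_eA]
  rcases le_or_gt 0 j with hj | hj
  · obtain ⟨n, rfl⟩ := Int.eq_ofNat_of_zero_le hj
    have e1 : (2 * (n : ℤ) + 1).toNat = 2 * n + 1 := by omega
    have e2 : (-(-(n : ℤ) - 1) - 1).toNat = n := by omega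
    rw [aVec, psiPVec, if_pos (show (0 : ℤ) ≤ 2 * (n : ℤ) + 1 by omega),
      if_pos (show -(n : ℤ) - 1 < 0 by omega), e1, e2]
    simp only [← mem_oddPart]
    split_ifs with h
    · simp
    · rw [map_smul, corrT_eD, oddPart_insert_odd, evenPart_insert_odd, card_gt_odd]
      apply smul_congr_sign
      rw [invNum_insert_left _ _ _ h]
      omega
  · obtain ⟨n, rfl⟩ : ∃ n : ℕ, j = -(n : ℤ) - 1 := ⟨(-j - 1).toNat, by omega⟩
    have e1 : (-(2 * (-(n : ℤ) - 1) + 1) - 1).toNat = 2 * n := by omega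
    have e2 : (-(-(n : ℤ) - 1) - 1).toNat = n := by omega
    rw [aVec, psiPVec, if_neg (show ¬ (0 : ℤ) ≤ 2 * (-(n : ℤ) - 1) + 1 by omega),
      if_neg (show ¬ -(-(n : ℤ) - 1) - 1 < 0 by omega), e1, e2]
    simp only [← mem_evenPart]
    split_ifs with h
    · rw [map_smul, corrT_eD, oddPart_erase_even, evenPart_erase_even, card_gt_even]
      apply smul_congr_sign
      have h1 := invNum_insert_right (oddPart S) ((evenPart S).erase n) n (by simp)
      rw [Finset.insert_erase h] at h1
      have h2 := card_split_lt (oddPart S) n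
      omega
    · simp

theorem basis_even (j : ℤ) (S : Finset ℕ) :
    corrT (aOp (2 * j) (eD S)) = psiM (-j - 1) (corrT (eD S)) := by
  rw [aOp_eD, corrT_eD, map_smul, psiM_eA]
  rcases le_or_gt 0 j with hj | hj
  · obtain ⟨n, rfl⟩ := Int.eq_ofNat_of_zero_le hj
    have e1 : (2 * (n : ℤ)).toNat = 2 * n := by omega
    have e2 : (-(-(n : ℤ) - 1) - 1).toNat = n := by omega
    rw [aVec, psiMVec, if_pos (show (0 : ℤ) ≤ 2 * (n : ℤ) by omega),
      if_pos (show -(n : ℤ) - 1 < 0 by omega), e1, e2]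
    simp only [← mem_evenPart]
    split_ifs with h
    · simp
    · rw [map_smul, corrT_eD, oddPart_insert_even, evenPart_insert_even, card_gt_even]
      apply smul_congr_sign
      rw [invNum_insert_right _ _ _ h]
      have h2 := card_split_lt (oddPart S) n
      omega
  · obtain ⟨n, rfl⟩ : ∃ n : ℕ, j = -(n : ℤ) - 1 := ⟨(-j - 1).toNat, by omega⟩
    have e1 : (-(2 * (-(n : ℤ) - 1)) - 1).toNat = 2 * n + 1 := by omega
    have e2 : (-(-(n : ℤ) - 1) - 1).toNat = n := by omega
    rw [aVec, psiMVec, if_neg (show ¬ (0 : ℤ) ≤ 2 * (-(n : ℤ) - 1) by omega),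
      if_neg (show ¬ -(-(n : ℤ) - 1) - 1 < 0 by omega), e1, e2]
    simp only [← mem_oddPart]
    split_ifs with h
    · rw [map_smul, corrT_eD, oddPart_erase_odd, evenPart_erase_odd, card_gt_odd]
      apply smul_congr_sign
      have h1 := invNum_insert_left ((oddPart S).erase n) (evenPart S) n (by simp)
      rw [Finset.insert_erase h] at h1
      omega
    · simp

theorem ext_basis (f g : FockD →ₗ[ℂ] FockA) (h : ∀ S, f (eD S) = g (eD S)) (x : FockD) :
    f x = g x := by
  have : f = g := by
    apply Finsupp.lhom_ext'
    intro S
    apply LinearMap.ext_ring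
    exact h S
  rw [this]

/-- Boson-fermion correspondence of type D-A at the level of Fock spaces: there is a
ℂ-linear bijection `T : F^{⊗1/2} → F^{⊗1}` with `T(e_∅) = e_{(∅,∅)}` identifying the odd
fermion modes with the `ψ⁺`-modes and the even modes with the `ψ⁻`-modes:
`T(a_{2j+1} x) = ψ⁺_{−j−1}(T x)` and `T(a_{2j} x) = ψ⁻_{−j−1}(T x)` for all `j ∈ ℤ`. -/
theorem boson_fermion_correspondence_D_A :
    ∃ T : FockD ≃ₗ[ℂ] FockA,
      T (eD ∅) = eA ∅ ∅ ∧
      ∀ (j : ℤ) (x : FockD),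
        T (aOp (2 * j + 1) x) = psiP (-j - 1) (T x) ∧
        T (aOp (2 * j) x) = psiM (-j - 1) (T x) := by
  refine ⟨corrT, ?_, fun j x => ⟨?_, ?_⟩⟩
  · rw [corrT_eD]
    have h1 : oddPart ∅ = ∅ := by ext a; simp [mem_oddPart]
    have h2 : evenPart ∅ = ∅ := by ext a; simp [mem_evenPart]
    rw [h1, h2]
    simp [invNum]
  · exact ext_basis (corrT.toLinearMap.comp (aOp (2 * j + 1)))
      ((psiP (-j - 1)).comp corrT.toLinearMap) (basis_odd j) x
  · exact ext_basis (corrT.toLinearMap.comp (aOp (2 * j)))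
      ((psiM (-j - 1)).comp corrT.toLinearMap) (basis_even j) x
end
end
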